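/- The set of n-event synchronization matrices is closed under element-wise intersection and element-wise union: if M and N are n-event synchronization matrices, then the matrices (i,j) ↦ M i j ∩ N i j and (i,j) ↦ M i j ∪ N i j are also n-event synchronization matrices (the diagonal remains 1, entries remain in S, and mirror symmetry across the diagonal is preserved because μ(a ∩ b) = μ(a) ∩ μ(b) and μ(a ∪ b) = μ(a) ∪ μ(b)). -/

import Mathlib

/-- Synchronization relation `≥` on times in ℝ. -/
def relGE : Set (ℝ × ℝ) := {p | p.1 ≥ p.2}
/-- Synchronization relation `≤`. -/
def relLE : Set (ℝ × ℝ) := {p | p.1 ≤ p.2}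
/-- Synchronization relation `=`. -/
def relEQ : Set (ℝ × ℝ) := {p | p.1 = p.2}
/-- Synchronization relation `≠`. -/
def relNE : Set (ℝ × ℝ) := {p | p.1 ≠ p.2}
/-- Synchronization relation `>`. -/
def relGT : Set (ℝ × ℝ) := {p | p.1 > p.2}
/-- Synchronization relation `<`. -/
def relLT : Set (ℝ × ℝ) := {p | p.1 < p.2}

/-- The set `S` of the eight synchronization relations:
`{1, ≥, ≤, =, ≠, >, <, 0}` where `1 = univ` and `0 = ∅`. -/
def SyncS : Set (Set (ℝ × ℝ)) :=
  {Set.univ, relGE, relLE, relEQ, relNE, relGT, relLT, ∅}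

/-- The mirror operator `μ`. -/
def mirror (s : Set (ℝ × ℝ)) : Set (ℝ × ℝ) := {p | (p.2, p.1) ∈ s}

/-- An `n`-event synchronization matrix: diagonal entries are `1 = univ`,
off-diagonal entries lie in `S`, and `M j i = μ (M i j)`. -/
def IsSyncMatrix {n : ℕ} (M : Fin n → Fin n → Set (ℝ × ℝ)) : Prop :=
  (∀ i, M i i = Set.univ) ∧
  (∀ i j, i ≠ j → M i j ∈ SyncS) ∧
  (∀ i j, M j i = mirror (M i j))

/-!
Comparing two times gives one of three outcomes `<`, `=`, `>`, and a synchronization relation is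
determined by the set of outcomes it allows: `SyncS` consists of the preimages under comparison of
the `2 ^ 3` subsets of `Ordering`. Preimages commute with `∩` and `∪`, so `SyncS` is closed under
both. Mirroring is itself a preimage, under swapping the two times, so it commutes with both too.
-/

lemma subsingleton_or_compl_subsingleton_of_card_le_three {α : Type*} [Finite α]
    (hα : Nat.card α ≤ 3) (s : Set α) : s.Subsingleton ∨ sᶜ.Subsingleton := by
  have hcard : s.ncard + sᶜ.ncard = Nat.card α := s.ncard_add_ncard_compl
  have hsmall : s.ncard ≤ 1 ∨ sᶜ.ncard ≤ 1 := by omega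
  exact hsmall.imp s.ncard_le_one_iff_subsingleton.mp sᶜ.ncard_le_one_iff_subsingleton.mp

lemma cmp_preimage_lt : Function.uncurry cmp ⁻¹' {.lt} = relLT := by
  ext p
  exact cmp_eq_lt_iff p.1 p.2

lemma cmp_preimage_eq : Function.uncurry cmp ⁻¹' {.eq} = relEQ := by
  ext p
  exact cmp_eq_eq_iff p.1 p.2

lemma cmp_preimage_gt : Function.uncurry cmp ⁻¹' {.gt} = relGT := by
  ext p
  exact cmp_eq_gt_iff p.1 p.2

lemma compl_relLT : relLTᶜ = relGE := by
  ext p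
  exact not_lt (a := p.1)

lemma compl_relEQ : relEQᶜ = relNE := rfl

lemma compl_relGT : relGTᶜ = relLE := by
  ext p
  exact not_lt (b := p.1)

lemma compl_mem_SyncS {s : Set (ℝ × ℝ)} (hs : s ∈ SyncS) : sᶜ ∈ SyncS := by
  rcases hs with rfl | rfl | rfl | rfl | rfl | rfl | rfl | rfl <;>
    simp [SyncS, ← compl_relLT, ← compl_relEQ, ← compl_relGT]

lemma cmp_preimage_mem_SyncS_of_subsingleton {A : Set Ordering} (hA : A.Subsingleton) :
    Function.uncurry cmp ⁻¹' A ∈ SyncS := by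
  obtain rfl | ⟨o, rfl⟩ := hA.eq_empty_or_singleton
  · simp [SyncS]
  · cases o <;> simp [SyncS, cmp_preimage_lt, cmp_preimage_eq, cmp_preimage_gt]

lemma cmp_preimage_mem_SyncS (A : Set Ordering) : Function.uncurry cmp ⁻¹' A ∈ SyncS := by
  have hcard : Nat.card Ordering ≤ 3 := by
    rw [Nat.card_eq_fintype_card]
    decide
  obtain hA | hA := subsingleton_or_compl_subsingleton_of_card_le_three hcard A
  · exact cmp_preimage_mem_SyncS_of_subsingleton hA
  · simpa only [Set.preimage_compl, compl_compl] using
      compl_mem_SyncS (cmp_preimage_mem_SyncS_of_subsingleton hA)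

theorem SyncS_eq_range_cmp_preimage : SyncS = Set.range (Set.preimage (Function.uncurry cmp)) := by
  refine Set.Subset.antisymm ?_ (Set.range_subset_iff.mpr cmp_preimage_mem_SyncS)
  rintro _ (rfl | rfl | rfl | rfl | rfl | rfl | rfl | rfl)
  · exact ⟨Set.univ, Set.preimage_univ⟩
  · exact ⟨{.lt}ᶜ, by rw [Set.preimage_compl, cmp_preimage_lt, compl_relLT]⟩
  · exact ⟨{.gt}ᶜ, by rw [Set.preimage_compl, cmp_preimage_gt, compl_relGT]⟩
  · exact ⟨{.eq}, cmp_preimage_eq⟩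
  · exact ⟨{.eq}ᶜ, by rw [Set.preimage_compl, cmp_preimage_eq, compl_relEQ]⟩
  · exact ⟨{.gt}, cmp_preimage_gt⟩
  · exact ⟨{.lt}, cmp_preimage_lt⟩
  · exact ⟨∅, Set.preimage_empty⟩

lemma inter_mem_SyncS {s t : Set (ℝ × ℝ)} (hs : s ∈ SyncS) (ht : t ∈ SyncS) :
    s ∩ t ∈ SyncS := by
  rw [SyncS_eq_range_cmp_preimage] at *
  obtain ⟨A, rfl⟩ := hs
  obtain ⟨B, rfl⟩ := ht
  exact ⟨A ∩ B, Set.preimage_inter⟩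

lemma union_mem_SyncS {s t : Set (ℝ × ℝ)} (hs : s ∈ SyncS) (ht : t ∈ SyncS) :
    s ∪ t ∈ SyncS := by
  rw [SyncS_eq_range_cmp_preimage] at *
  obtain ⟨A, rfl⟩ := hs
  obtain ⟨B, rfl⟩ := ht
  exact ⟨A ∪ B, Set.preimage_union⟩

lemma mirror_inter (s t : Set (ℝ × ℝ)) : mirror (s ∩ t) = mirror s ∩ mirror t := rfl

lemma mirror_union (s t : Set (ℝ × ℝ)) : mirror (s ∪ t) = mirror s ∪ mirror t := rfl

lemma IsSyncMatrix.map₂ {n : ℕ} {M N : Fin n → Fin n → Set (ℝ × ℝ)}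
    {op : Set (ℝ × ℝ) → Set (ℝ × ℝ) → Set (ℝ × ℝ)}
    (op_univ : op Set.univ Set.univ = Set.univ)
    (op_mem : ∀ {s t}, s ∈ SyncS → t ∈ SyncS → op s t ∈ SyncS)
    (mirror_op : ∀ s t, mirror (op s t) = op (mirror s) (mirror t))
    (hM : IsSyncMatrix M) (hN : IsSyncMatrix N) :
    IsSyncMatrix (fun i j => op (M i j) (N i j)) := by
  obtain ⟨diagM, memM, mirrorM⟩ := hM
  obtain ⟨diagN, memN, mirrorN⟩ := hN
  refine ⟨fun i => ?_, fun i j hij => op_mem (memM i j hij) (memN i j hij), fun i j => ?_⟩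
  · simp only [diagM, diagN, op_univ]
  · simp only [mirror_op, ← mirrorM, ← mirrorN]

theorem syncMatrix_closed_inter_union {n : ℕ}
    (M N : Fin n → Fin n → Set (ℝ × ℝ))
    (hM : IsSyncMatrix M) (hN : IsSyncMatrix N) :
    IsSyncMatrix (fun i j => M i j ∩ N i j) ∧
    IsSyncMatrix (fun i j => M i j ∪ N i j) := by
  exact ⟨hM.map₂ (Set.inter_self _) inter_mem_SyncS mirror_inter hN,
    hM.map₂ (Set.union_self _) union_mem_SyncS mirror_union hN⟩
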